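/- Let h > 0 be a real number and let φ_n : [0, nh] → [0,∞), for n ≥ 1, be a sequence of bounded concave functions such that φ_{n+m} ≤ φ_n ⊗ φ_m for all n, m ≥ 1. Fix an integer n₀ ≥ 1 and let C ≥ 0 be a constant such that φ_r(t) ≤ C for every integer 1 ≤ r < n₀ and every t ∈ [0, rh]. Then for every integer n ≥ 1 and every x ∈ [0, h], one has φ_n(nx) ≤ (n/n₀) · φ_{n₀}(n₀ x) + C. -/

import Mathlib

/-- The tropical convolution of `f : [0,h₁] → ℝ` and `g : [0,h₂] → ℝ`:
`(f ⊗ g)(x) = sup { f a + g b : 0 ≤ a ≤ h₁, 0 ≤ b ≤ h₂, a + b = x }`. -/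
noncomputable def tropConv (h₁ h₂ : ℝ) (f g : ℝ → ℝ) : ℝ → ℝ := fun x =>
  sSup {y | ∃ a b : ℝ, 0 ≤ a ∧ a ≤ h₁ ∧ 0 ≤ b ∧ b ≤ h₂ ∧ a + b = x ∧ y = f a + g b}

/-!
The right-hand side `(n / n₀) φ_{n₀}(n₀ x)` is the perspective `(t, y) ↦ t f(y / t)` of the concave
function `f = φ_{n₀}`, taken at `t = n / n₀` and `y = n x`. The perspective of a concave function is
superadditive in `(t, y)` jointly, so a bound `g ≤ t f(· / t) + C` on `g` gives the bound
`f ⊗ g ≤ (1 + t) f(· / (1 + t)) + C` on the convolution. Splitting off `φ_{n₀}` repeatedly from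
`φ_n` lowers the index to at most `n₀`, and below `n₀` the constant `C` suffices as `φ_{n₀} ≥ 0`.
-/

section Perspective

variable {𝕜 E β : Type*} [Field 𝕜] [AddCommGroup E] [Module 𝕜 E] [AddCommMonoid β] [Module 𝕜 β]

/-- The perspective `(t, x) ↦ t f(x / t)` of `f`, meant for `t > 0`: it extends `f` from the slice
`t = 1` to a function homogeneous of degree one on the cone over the domain of `f`. At `t = 0` it
takes the junk value `0`. -/
def perspective (f : E → β) (t : 𝕜) (x : E) : β :=
  t • f (t⁻¹ • x)

theorem perspective_one (f : E → β) (x : E) : perspective f (1 : 𝕜) x = f x := by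
  simp only [perspective, inv_one, one_smul]

open scoped Pointwise

variable [LinearOrder 𝕜] [PartialOrder β] [PosSMulMono 𝕜 β] {S : Set E} {f : E → β} {s t : 𝕜}
  {x y : E}

theorem perspective_nonneg (hf : ∀ u ∈ S, 0 ≤ f u) (ht : 0 < t) (hx : x ∈ t • S) :
    0 ≤ perspective f t x :=
  smul_nonneg ht.le (hf _ ((Set.mem_smul_set_iff_inv_smul_mem₀ ht.ne' _ _).1 hx))

theorem perspective_add_perspective_le [IsStrictOrderedRing 𝕜] (hf : ConcaveOn 𝕜 S f)
    (hs : 0 < s) (ht : 0 < t) (hx : x ∈ s • S) (hy : y ∈ t • S) :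
    perspective f s x + perspective f t y ≤ perspective f (s + t) (x + y) := by
  obtain ⟨u, hu, rfl⟩ := hx
  obtain ⟨v, hv, rfl⟩ := hy
  have hst : 0 < s + t := add_pos hs ht
  have jensen : (s / (s + t)) • f u + (t / (s + t)) • f v ≤
      f ((s / (s + t)) • u + (t / (s + t)) • v) :=
    hf.2 hu hv (by positivity) (by positivity) (by field_simp)
  calc perspective f s (s • u) + perspective f t (t • v)
      = (s + t) • ((s / (s + t)) • f u + (t / (s + t)) • f v) := by
        simp only [perspective, inv_smul_smul₀ hs.ne', inv_smul_smul₀ ht.ne', smul_add, smul_smul,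
          mul_div_cancel₀ _ hst.ne']
    _ ≤ (s + t) • f ((s / (s + t)) • u + (t / (s + t)) • v) :=
        smul_le_smul_of_nonneg_left jensen hst.le
    _ = perspective f (s + t) (s • u + t • v) := by
        simp only [perspective, smul_add, smul_smul, div_eq_inv_mul]

end Perspective

theorem tropConv_le {h₁ h₂ x M : ℝ} {f g : ℝ → ℝ} (h₁_nonneg : 0 ≤ h₁) (h₂_nonneg : 0 ≤ h₂)
    (hx : x ∈ Set.Icc 0 (h₁ + h₂))
    (hM : ∀ a ∈ Set.Icc 0 h₁, ∀ b ∈ Set.Icc 0 h₂, a + b = x → f a + g b ≤ M) :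
    tropConv h₁ h₂ f g x ≤ M := by
  apply csSup_le
  · refine ⟨_, min x h₁, x - min x h₁, le_min hx.1 h₁_nonneg, min_le_right _ _,
      sub_nonneg.2 (min_le_left _ _), ?_, add_sub_cancel _ _, rfl⟩
    rcases min_cases x h₁ with ⟨h_min, -⟩ | ⟨h_min, -⟩ <;> linarith [hx.2]
  · rintro _ ⟨a, b, ha, ha', hb, hb', hab, rfl⟩
    exact hM a ⟨ha, ha'⟩ b ⟨hb, hb'⟩ hab

theorem tropConv_le_perspective_add {h₁ h₂ t C x : ℝ} {f g : ℝ → ℝ} (h₁_nonneg : 0 ≤ h₁)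
    (ht : 0 < t) (hth : t * h₁ = h₂) (hf : ConcaveOn ℝ (Set.Icc 0 h₁) f)
    (hg : ∀ b ∈ Set.Icc 0 h₂, g b ≤ perspective f t b + C) (hx : x ∈ Set.Icc 0 (h₁ + h₂)) :
    tropConv h₁ h₂ f g x ≤ perspective f (1 + t) x + C := by
  refine tropConv_le h₁_nonneg (hth ▸ mul_nonneg ht.le h₁_nonneg) hx ?_
  rintro a ha b hb rfl
  have superadditive :
      perspective f (1 : ℝ) a + perspective f t b ≤ perspective f (1 + t) (a + b) := by
    refine perspective_add_perspective_le hf one_pos ht ?_ ?_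
    · rwa [LinearOrderedField.smul_Icc one_pos, mul_zero, one_mul]
    · rwa [LinearOrderedField.smul_Icc ht, mul_zero, hth]
  rw [perspective_one] at superadditive
  linarith [hg b hb]

section Sequence

variable {h C : ℝ} {φ : ℕ → ℝ → ℝ} {n₀ : ℕ}

theorem le_perspective_add_of_le_tropConv (hh : 0 ≤ h) (hn₀ : 1 ≤ n₀)
    (hconc : ConcaveOn ℝ (Set.Icc 0 (n₀ * h)) (φ n₀))
    (hnonneg : ∀ x ∈ Set.Icc 0 (n₀ * h), 0 ≤ φ n₀ x)
    (hsub : ∀ m : ℕ, 1 ≤ m → ∀ x ∈ Set.Icc 0 ((n₀ + m : ℝ) * h),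
      φ (n₀ + m) x ≤ tropConv (n₀ * h) (m * h) (φ n₀) (φ m) x)
    (hC : 0 ≤ C) (hCb : ∀ r : ℕ, 1 ≤ r → r < n₀ → ∀ t ∈ Set.Icc 0 (r * h), φ r t ≤ C)
    {n : ℕ} (hn : 1 ≤ n) {y : ℝ} (hy : y ∈ Set.Icc 0 (n * h)) :
    φ n y ≤ perspective (φ n₀) (n / n₀ : ℝ) y + C := by
  have n₀_pos : (0 : ℝ) < n₀ := by exact_mod_cast hn₀
  have length_eq (m : ℕ) : (m / n₀ : ℝ) * (n₀ * h) = m * h := by field_simp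
  induction n using Nat.strong_induction_on generalizing y with
  | _ n ih =>
  rcases lt_trichotomy n n₀ with hlt | rfl | hgt
  · have ratio_pos : (0 : ℝ) < n / n₀ := div_pos (by exact_mod_cast hn) n₀_pos
    have nonneg : 0 ≤ perspective (φ n₀) (n / n₀ : ℝ) y := by
      refine perspective_nonneg hnonneg ratio_pos ?_
      rwa [LinearOrderedField.smul_Icc ratio_pos, mul_zero, length_eq]
    linarith [hCb n hn hlt y hy]
  · rw [div_self n₀_pos.ne', perspective_one]
    exact le_add_of_nonneg_right hC
  · obtain ⟨m, rfl⟩ := Nat.exists_eq_add_of_le hgt.le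
    have hm : 1 ≤ m := by omega
    have m_pos : (0 : ℝ) < m := by exact_mod_cast hm
    have ratio_eq : ((n₀ + m : ℕ) / n₀ : ℝ) = 1 + m / n₀ := by push_cast; field_simp
    rw [Nat.cast_add] at hy
    calc φ (n₀ + m) y ≤ tropConv (n₀ * h) (m * h) (φ n₀) (φ m) y := hsub m hm y hy
      _ ≤ perspective (φ n₀) (1 + m / n₀ : ℝ) y + C :=
          tropConv_le_perspective_add (by positivity) (by positivity) (length_eq m) hconc
            (fun b hb => ih m (by omega) hm hb) (add_mul (n₀ : ℝ) m h ▸ hy)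
      _ = perspective (φ n₀) ((n₀ + m : ℕ) / n₀ : ℝ) y + C := by rw [ratio_eq]

theorem phi_le_of_fixed_general (hn₀ : 1 ≤ n₀)
    (hconc : ConcaveOn ℝ (Set.Icc 0 (n₀ * h)) (φ n₀))
    (hnonneg : ∀ x ∈ Set.Icc 0 (n₀ * h), 0 ≤ φ n₀ x)
    (hsub : ∀ m : ℕ, 1 ≤ m → ∀ x ∈ Set.Icc 0 ((n₀ + m : ℝ) * h),
      φ (n₀ + m) x ≤ tropConv (n₀ * h) (m * h) (φ n₀) (φ m) x)
    (hC : 0 ≤ C) (hCb : ∀ r : ℕ, 1 ≤ r → r < n₀ → ∀ t ∈ Set.Icc 0 (r * h), φ r t ≤ C) :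
    ∀ n : ℕ, 1 ≤ n → ∀ x ∈ Set.Icc 0 h, φ n (n * x) ≤ (n / n₀ : ℝ) * φ n₀ (n₀ * x) + C := by
  intro n hn x hx
  have n_pos : (0 : ℝ) < n := by exact_mod_cast hn
  have hnx : (n * x : ℝ) ∈ Set.Icc 0 (n * h) :=
    ⟨mul_nonneg n_pos.le hx.1, mul_le_mul_of_nonneg_left hx.2 n_pos.le⟩
  have rescale : (n / n₀ : ℝ)⁻¹ * (n * x) = n₀ * x := by field_simp
  have bound := le_perspective_add_of_le_tropConv (hx.1.trans hx.2) hn₀ hconc hnonneg hsub hC hCb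
    hn hnx
  rwa [perspective, smul_eq_mul, smul_eq_mul, rescale] at bound

end Sequence

/-- For a sequence of bounded concave nonnegative functions `φ_n : [0, nh] → [0,∞)`
satisfying `φ_{n+m} ≤ φ_n ⊗ φ_m`, with `n₀ ≥ 1` fixed and `C ≥ 0` bounding `φ_r`
for all `1 ≤ r < n₀`, one has `φ_n(nx) ≤ (n/n₀) · φ_{n₀}(n₀ x) + C` for every
`n ≥ 1` and `x ∈ [0, h]`. -/
theorem phi_le_of_fixed (h : ℝ) (hh : 0 < h) (φ : ℕ → ℝ → ℝ)
    (hconc : ∀ n : ℕ, 1 ≤ n → ConcaveOn ℝ (Set.Icc 0 ((n : ℝ) * h)) (φ n))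
    (hnonneg : ∀ n : ℕ, 1 ≤ n → ∀ x ∈ Set.Icc (0 : ℝ) ((n : ℝ) * h), 0 ≤ φ n x)
    (hbdd : ∀ n : ℕ, 1 ≤ n → ∃ C : ℝ, ∀ x ∈ Set.Icc (0 : ℝ) ((n : ℝ) * h), φ n x ≤ C)
    (hsub : ∀ n : ℕ, 1 ≤ n → ∀ m : ℕ, 1 ≤ m →
      ∀ x ∈ Set.Icc (0 : ℝ) (((n : ℝ) + (m : ℝ)) * h),
        φ (n + m) x ≤ tropConv ((n : ℝ) * h) ((m : ℝ) * h) (φ n) (φ m) x)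
    (n₀ : ℕ) (hn₀ : 1 ≤ n₀) (C : ℝ) (hC : 0 ≤ C)
    (hCb : ∀ r : ℕ, 1 ≤ r → r < n₀ → ∀ t ∈ Set.Icc (0 : ℝ) ((r : ℝ) * h), φ r t ≤ C) :
    ∀ n : ℕ, 1 ≤ n → ∀ x ∈ Set.Icc (0 : ℝ) h,
      φ n ((n : ℝ) * x) ≤ ((n : ℝ) / (n₀ : ℝ)) * φ n₀ ((n₀ : ℝ) * x) + C := by
  exact phi_le_of_fixed_general hn₀ (hconc n₀ hn₀) (hnonneg n₀ hn₀) (hsub n₀ hn₀) hC hCb
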